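/- Let K be either the variety of monoids or the variety of commutative monoids. For every unary implicit operation f of K defined by a primitive positive formula there exist l, r ∈ ℕ such that a^l · f^A(a) = a^r for all A ∈ K and all a ∈ dom(f^A). -/

import Mathlib

namespace Impl

open FirstOrder Language

universe u v

/-- A bundled algebra (first-order structure) for the language `L`. -/
structure Alg (L : FirstOrder.Language.{u, u}) : Type (u + 1) where
  carrier : Type u
  [str : L.Structure carrier]

attribute [instance] Alg.str

variable {L : FirstOrder.Language.{u, u}}

/-- The direct product of a family of algebras. -/
def Alg.pi {ι : Type u} (A : ι → Alg L) : Alg L where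
  carrier := ∀ i, (A i).carrier
  str :=
    { funMap := fun {k} f v i => Structure.funMap f fun j => v j i
      RelMap := fun {k} r v => ∀ i, Structure.RelMap r fun j => v j i }

/-- The binary direct product of two algebras. -/
def Alg.prod (A B : Alg L) : Alg L where
  carrier := A.carrier × B.carrier
  str :=
    { funMap := fun {k} f v =>
        (Structure.funMap f fun j => (v j).1, Structure.funMap f fun j => (v j).2)
      RelMap := fun {k} r v =>
        Structure.RelMap r (fun j => (v j).1) ∧ Structure.RelMap r fun j => (v j).2 }

/-- The ultraproduct of a family of algebras with respect to an ultrafilter. -/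
def Alg.uprod {ι : Type u} (F : Ultrafilter ι) (A : ι → Alg L) : Alg L where
  carrier := Filter.Product (F : Filter ι) fun i => (A i).carrier
  str := inferInstance

/-- Closure under isomorphic copies. -/
def ClosedUnderIso (K : Set (Alg L)) : Prop :=
  ∀ A B : Alg L, A ∈ K → Nonempty (A.carrier ≃[L] B.carrier) → B ∈ K

/-- Closure under subalgebras (up to the identification of a subalgebra with an embedding). -/
def ClosedUnderSub (K : Set (Alg L)) : Prop :=
  ∀ A B : Alg L, B ∈ K → Nonempty (A.carrier ↪[L] B.carrier) → A ∈ K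

/-- Closure under direct products. -/
def ClosedUnderProd (K : Set (Alg L)) : Prop :=
  ∀ (ι : Type u) (A : ι → Alg L), (∀ i, A i ∈ K) → Alg.pi A ∈ K

/-- Closure under finite direct products. -/
def ClosedUnderFinProd (K : Set (Alg L)) : Prop :=
  ∀ (ι : Type u), Finite ι → ∀ A : ι → Alg L, (∀ i, A i ∈ K) → Alg.pi A ∈ K

/-- Closure under homomorphic images. -/
def ClosedUnderHomImg (K : Set (Alg L)) : Prop :=
  ∀ A B : Alg L, A ∈ K → ∀ h : A.carrier →[L] B.carrier, Function.Surjective h → B ∈ K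

/-- Closure under ultraproducts. -/
def ClosedUnderUprod (K : Set (Alg L)) : Prop :=
  ∀ (ι : Type u) (F : Ultrafilter ι) (A : ι → Alg L), (∀ i, A i ∈ K) → Alg.uprod F A ∈ K

/-- A universal class: a class closed under isomorphic copies, subalgebras and ultraproducts. -/
def IsUniversalClass (K : Set (Alg L)) : Prop :=
  ClosedUnderIso K ∧ ClosedUnderSub K ∧ ClosedUnderUprod K

/-- A quasivariety: a class closed under isomorphic copies, subalgebras, direct products and
ultraproducts. -/
def IsQuasivariety (K : Set (Alg L)) : Prop :=
  ClosedUnderIso K ∧ ClosedUnderSub K ∧ ClosedUnderProd K ∧ ClosedUnderUprod K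

/-- A variety: a class closed under homomorphic images, subalgebras and direct products. -/
def IsVariety (K : Set (Alg L)) : Prop :=
  ClosedUnderHomImg K ∧ ClosedUnderSub K ∧ ClosedUnderProd K

/-- The least quasivariety containing `K`. -/
def QGen (K : Set (Alg L)) : Set (Alg L) :=
  ⋂₀ { M : Set (Alg L) | IsQuasivariety M ∧ K ⊆ M }

/-- The least variety containing `K`. -/
def VGen (K : Set (Alg L)) : Set (Alg L) :=
  ⋂₀ { M : Set (Alg L) | IsVariety M ∧ K ⊆ M }

/-- An elementary class: the class of all models of some first-order theory. -/
def IsElementary (K : Set (Alg L)) : Prop :=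
  ∃ T : L.Theory, ∀ A : Alg L, A ∈ K ↔ ∀ φ ∈ T, A.carrier ⊨ φ

/-- Finite conjunctions of equations (with `⊤` as the empty conjunction). -/
inductive IsConjEq {α : Type v} : ∀ {k : ℕ}, L.BoundedFormula α k → Prop
  | top {k} : IsConjEq (⊤ : L.BoundedFormula α k)
  | equal {k} (t₁ t₂ : L.Term (α ⊕ Fin k)) : IsConjEq (BoundedFormula.equal t₁ t₂)
  | inf {k} {φ ψ : L.BoundedFormula α k} : IsConjEq φ → IsConjEq ψ → IsConjEq (φ ⊓ ψ)

/-- Positive quantifier-free formulas: built from equations, `⊤` and `⊥` using `⊓` and `⊔`. -/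
inductive IsPosQF {α : Type v} : ∀ {k : ℕ}, L.BoundedFormula α k → Prop
  | falsum {k} : IsPosQF (⊥ : L.BoundedFormula α k)
  | top {k} : IsPosQF (⊤ : L.BoundedFormula α k)
  | equal {k} (t₁ t₂ : L.Term (α ⊕ Fin k)) : IsPosQF (BoundedFormula.equal t₁ t₂)
  | inf {k} {φ ψ : L.BoundedFormula α k} : IsPosQF φ → IsPosQF ψ → IsPosQF (φ ⊓ ψ)
  | sup {k} {φ ψ : L.BoundedFormula α k} : IsPosQF φ → IsPosQF ψ → IsPosQF (φ ⊔ ψ)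

/-- Primitive positive (pp) formulas: existentially quantified finite conjunctions of
equations. -/
inductive IsPP {α : Type v} : ∀ {k : ℕ}, L.BoundedFormula α k → Prop
  | of_conjEq {k} {φ : L.BoundedFormula α k} : IsConjEq φ → IsPP φ
  | ex {k} {φ : L.BoundedFormula α (k + 1)} : IsPP φ → IsPP φ.ex

/-- Existential positive formulas: existentially quantified positive quantifier-free
formulas. -/
inductive IsExistPos {α : Type v} : ∀ {k : ℕ}, L.BoundedFormula α k → Prop
  | of_posQF {k} {φ : L.BoundedFormula α k} : IsPosQF φ → IsExistPos φ
  | ex {k} {φ : L.BoundedFormula α (k + 1)} : IsExistPos φ → IsExistPos φ.ex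

/-- Two formulas are equivalent in a class of algebras. -/
def EquivOn (K : Set (Alg L)) {α : Type v} (φ ψ : L.Formula α) : Prop :=
  ∀ A : Alg L, A ∈ K → ∀ x : α → A.carrier, φ.Realize x ↔ ψ.Realize x

/-- A formula is preserved by homomorphisms in `K`. -/
def PreservedByHomsOn (K : Set (Alg L)) {α : Type v} (φ : L.Formula α) : Prop :=
  ∀ A B : Alg L, A ∈ K → B ∈ K → ∀ (h : A.carrier →[L] B.carrier) (x : α → A.carrier),
    φ.Realize x → φ.Realize fun a => h (x a)

/-- A formula is preserved by direct products in `K`. -/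
def PreservedByProdsOn (K : Set (Alg L)) {α : Type v} (φ : L.Formula α) : Prop :=
  ∀ (ι : Type u) (A : ι → Alg L), (∀ i, A i ∈ K) → ∀ x : α → (Alg.pi A).carrier,
    (∀ i, φ.Realize fun a => x a i) → φ.Realize x

/-- An `n`-ary partial function on a class of algebras `K`: a family assigning to each member of
`K` an `n`-ary partial function on its carrier. -/
def PartialFunOn (K : Set (Alg L)) (n : ℕ) :=
  ∀ (A : Alg L), A ∈ K → ((Fin n → A.carrier) →. A.carrier)

/-- A partial function on `K` is defined by the formula `φ(x₁, …, xₙ, y)` (the last variable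
being the output) when its graph on each member of `K` is the solution set of `φ`. -/
def DefinedBy {K : Set (Alg L)} {n : ℕ} (f : PartialFunOn K n)
    (φ : L.Formula (Fin (n + 1))) : Prop :=
  ∀ (A : Alg L) (hA : A ∈ K) (x : Fin n → A.carrier) (b : A.carrier),
    b ∈ f A hA x ↔ φ.Realize (Fin.snoc x b)

/-- The formula `φ(x₁, …, xₙ, y)` is functional in `K`: for all inputs there is at most one
output satisfying it. -/
def FunctionalIn (K : Set (Alg L)) {n : ℕ} (φ : L.Formula (Fin (n + 1))) : Prop :=
  ∀ A : Alg L, A ∈ K → ∀ (x : Fin n → A.carrier) (b₁ b₂ : A.carrier),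
    φ.Realize (Fin.snoc x b₁) → φ.Realize (Fin.snoc x b₂) → b₁ = b₂

/-- A partial function on `K` is an operation of `K` when it is preserved by all homomorphisms
between members of `K`. -/
def IsOperationOn {K : Set (Alg L)} {n : ℕ} (f : PartialFunOn K n) : Prop :=
  ∀ (A B : Alg L) (hA : A ∈ K) (hB : B ∈ K) (h : A.carrier →[L] B.carrier)
    (x : Fin n → A.carrier) (b : A.carrier),
    b ∈ f A hA x → h b ∈ f B hB fun i => h (x i)

/-- A partial function on `K` is implicit when it is defined by some formula. -/
def IsImplicit {K : Set (Alg L)} {n : ℕ} (f : PartialFunOn K n) : Prop :=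
  ∃ φ : L.Formula (Fin (n + 1)), DefinedBy f φ

/-- An implicit operation of `K`: a partial function that is both implicit and an operation. -/
def IsImplicitOp {K : Set (Alg L)} {n : ℕ} (f : PartialFunOn K n) : Prop :=
  IsImplicit f ∧ IsOperationOn f

/-- An implicit operation is extendable when every tuple in every member of `K` lies in the
domain of the operation in some extension inside `K`. -/
def Extendable {K : Set (Alg L)} {n : ℕ} (f : PartialFunOn K n) : Prop :=
  ∀ (A : Alg L) (hA : A ∈ K) (x : Fin n → A.carrier),
    ∃ (B : Alg L) (hB : B ∈ K) (e : A.carrier ↪[L] B.carrier),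
      (f B hB fun i => e (x i)).Dom

/-- The dominion of a subset `s` of `M` relative to the class `K`. -/
def dominion (K : Set (Alg L)) (M : Type u) [L.Structure M] (s : Set M) : Set M :=
  { b | ∀ C : Alg L, C ∈ K → ∀ g h : M →[L] C.carrier, (∀ a ∈ s, g a = h a) → g b = h b }

/-- The strong epimorphism surjectivity property. -/
def StrongES (K : Set (Alg L)) : Prop :=
  ∀ (A B : Alg L), A ∈ K → B ∈ K → ∀ (f : A.carrier →[L] B.carrier) (b : B.carrier),
    b ∉ Set.range f →
      ∃ C : Alg L, C ∈ K ∧ ∃ g h : B.carrier →[L] C.carrier,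
        (∀ a : A.carrier, g (f a) = h (f a)) ∧ g b ≠ h b

/-- The weak epimorphism surjectivity property: every `K`-epimorphism between finitely
generated members of `K` is surjective. -/
def WeakES (K : Set (Alg L)) : Prop :=
  ∀ (A B : Alg L), A ∈ K → B ∈ K →
    Structure.FG L A.carrier → Structure.FG L B.carrier →
      ∀ f : A.carrier →[L] B.carrier,
        (∀ C : Alg L, C ∈ K → ∀ g h : B.carrier →[L] C.carrier,
          (∀ a : A.carrier, g (f a) = h (f a)) → g = h) →
        Function.Surjective f

/-- The amalgamation property. -/
def HasAmalgamation (K : Set (Alg L)) : Prop :=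
  ∀ (A B C : Alg L), A ∈ K → B ∈ K → C ∈ K →
    ∀ (f : A.carrier ↪[L] B.carrier) (g : A.carrier ↪[L] C.carrier),
      ∃ D : Alg L, D ∈ K ∧ ∃ (f' : B.carrier ↪[L] D.carrier) (g' : C.carrier ↪[L] D.carrier),
        ∀ a : A.carrier, f' (f a) = g' (g a)

/-- A finitely presented member of `K`: an algebra in `K` with a finite presentation, phrased
through the usual universal property of `T(X)/Cg_K(Y)`. -/
def FinitelyPresentedIn (K : Set (Alg L)) (B : Alg L) : Prop :=
  B ∈ K ∧ ∃ (m : ℕ) (Y : Finset (L.Term (Fin m) × L.Term (Fin m))) (b : Fin m → B.carrier),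
    Substructure.closure L (Set.range b) = ⊤ ∧
    (∀ p ∈ Y, p.1.realize b = p.2.realize b) ∧
    ∀ C : Alg L, C ∈ K → ∀ x : Fin m → C.carrier,
      (∀ p ∈ Y, p.1.realize x = p.2.realize x) →
        ∃ g : B.carrier →[L] C.carrier, ∀ i, g (b i) = x i

/-- Subdirectly irreducible relative to `K`. -/
def IsRSI (K : Set (Alg L)) (A : Alg L) : Prop :=
  A ∈ K ∧ ∀ (ι : Type u) (B : ι → Alg L), (∀ i, B i ∈ K) →
    ∀ h : A.carrier ↪[L] (Alg.pi B).carrier,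
      (∀ i, Function.Surjective fun a => h a i) →
        ∃ i, Function.Bijective fun a => h a i

/-- Finitely subdirectly irreducible relative to `K`. -/
def IsRFSI (K : Set (Alg L)) (A : Alg L) : Prop :=
  A ∈ K ∧ ∀ (ι : Type u), Finite ι → ∀ B : ι → Alg L, (∀ i, B i ∈ K) →
    ∀ h : A.carrier ↪[L] (Alg.pi B).carrier,
      (∀ i, Function.Surjective fun a => h a i) →
        ∃ i, Function.Bijective fun a => h a i

/-- A congruence on an algebra: an equivalence relation compatible with all the operations. -/
def IsCongruenceOn (A : Alg L) (θ : A.carrier → A.carrier → Prop) : Prop :=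
  Equivalence θ ∧
    ∀ (k : ℕ) (f : L.Functions k) (x y : Fin k → A.carrier),
      (∀ i, θ (x i) (y i)) → θ (Structure.funMap f x) (Structure.funMap f y)

/-- The quotient of an algebra by (the setoid of) an equivalence relation; when the relation is
a congruence this is the quotient algebra. -/
noncomputable def Alg.quot (A : Alg L) (θ : A.carrier → A.carrier → Prop) (h : Equivalence θ) :
    Alg L where
  carrier := Quotient (⟨θ, h⟩ : Setoid A.carrier)
  str :=
    { funMap := fun {k} f v => Quotient.mk _ (Structure.funMap f fun i => (v i).out)
      RelMap := fun {k} r v => Structure.RelMap r fun i => (v i).out }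

/-- A `K`-congruence of `A`: a congruence whose quotient lies in `K`. -/
def IsRelCong (K : Set (Alg L)) (A : Alg L) (θ : A.carrier → A.carrier → Prop) : Prop :=
  ∃ h : IsCongruenceOn A θ, Alg.quot A θ h.1 ∈ K

/-- The join of two relations in the lattice of `K`-congruences of `A`. -/
def relCongJoin (K : Set (Alg L)) (A : Alg L)
    (θ φ : A.carrier → A.carrier → Prop) (x y : A.carrier) : Prop :=
  ∀ ρ : A.carrier → A.carrier → Prop, IsRelCong K A ρ →
    (∀ a b, θ a b → ρ a b) → (∀ a b, φ a b → ρ a b) → ρ x y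

/-- Relative congruence distributivity: the lattice of `K`-congruences of each member of `K`
is distributive. -/
def RelCongDistributive (K : Set (Alg L)) : Prop :=
  ∀ A : Alg L, A ∈ K → ∀ θ φ ψ : A.carrier → A.carrier → Prop,
    IsRelCong K A θ → IsRelCong K A φ → IsRelCong K A ψ →
      ∀ x y : A.carrier,
        (θ x y ∧ relCongJoin K A φ ψ x y) ↔
          relCongJoin K A (fun a b => θ a b ∧ φ a b) (fun a b => θ a b ∧ ψ a b) x y

/-- The join of two relations in the lattice of congruences of `A`. -/
def congJoin (A : Alg L) (θ φ : A.carrier → A.carrier → Prop) (x y : A.carrier) : Prop :=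
  ∀ ρ : A.carrier → A.carrier → Prop, IsCongruenceOn A ρ →
    (∀ a b, θ a b → ρ a b) → (∀ a b, φ a b → ρ a b) → ρ x y

/-- Congruence permutability for all members of a class. -/
def CongPermutableClass (K : Set (Alg L)) : Prop :=
  ∀ A : Alg L, A ∈ K → ∀ θ φ : A.carrier → A.carrier → Prop,
    IsCongruenceOn A θ → IsCongruenceOn A φ →
      ∀ x y : A.carrier, (∃ z, θ x z ∧ φ z y) ↔ ∃ z, φ x z ∧ θ z y

/-- Congruence distributivity for all members of a class. -/
def CongDistributiveClass (K : Set (Alg L)) : Prop :=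
  ∀ A : Alg L, A ∈ K → ∀ θ φ ψ : A.carrier → A.carrier → Prop,
    IsCongruenceOn A θ → IsCongruenceOn A φ → IsCongruenceOn A ψ →
      ∀ x y : A.carrier,
        (θ x y ∧ congJoin A φ ψ x y) ↔
          congJoin A (fun a b => θ a b ∧ φ a b) (fun a b => θ a b ∧ ψ a b) x y

/-- The congruence extension property. -/
def HasCEP (K : Set (Alg L)) : Prop :=
  ∀ A B : Alg L, A ∈ K → B ∈ K → ∀ e : A.carrier ↪[L] B.carrier,
    ∀ θ : A.carrier → A.carrier → Prop, IsCongruenceOn A θ →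
      ∃ ρ : B.carrier → B.carrier → Prop, IsCongruenceOn B ρ ∧
        ∀ x y : A.carrier, θ x y ↔ ρ (e x) (e y)

/-- The language consisting of one new function symbol `gᵢ` of arity `ar i` for each `i`. -/
def newLang {ι : Type u} (ar : ι → ℕ) : FirstOrder.Language.{u, u} where
  Functions := fun n => { i : ι // ar i = n }
  Relations := fun _ => PEmpty

/-- The `L`-reduct of an algebra in an expanded language `L.sum N`. -/
def algReduct {N : FirstOrder.Language.{u, u}} (B : Alg (L.sum N)) : Alg L where
  carrier := B.carrier
  str := (LHom.sumInl : L →ᴸ L.sum N).reduct B.carrier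

/-- The class `K[L_F]` of expansions of members of `K` on which each operation in the family
`f` is total, interpreting the new symbol `gᵢ` as `f i`. -/
def expClass (K : Set (Alg L)) {ι : Type u} (ar : ι → ℕ)
    (f : ∀ i, PartialFunOn K (ar i)) : Set (Alg (L.sum (newLang ar))) :=
  { B | ∃ hB : algReduct B ∈ K,
      ∀ (i : ι) (x : Fin (ar i) → B.carrier),
        Structure.funMap (L := L.sum (newLang ar)) (M := B.carrier)
            (Sum.inr ⟨i, rfl⟩ : (L.sum (newLang ar)).Functions (ar i)) x
          ∈ f i (algReduct B) hB x }

/-- Closure under subalgebras (and isomorphic copies) inside a fixed language. -/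
def SClosure {L' : FirstOrder.Language.{u, u}} (S : Set (Alg L')) : Set (Alg L') :=
  { A | ∃ B ∈ S, Nonempty (A.carrier ↪[L'] B.carrier) }

/-- Membership in `ext_pp(K)`: an extendable implicit operation defined by a pp formula. -/
def InExtPP {K : Set (Alg L)} {n : ℕ} (f : PartialFunOn K n) : Prop :=
  IsOperationOn f ∧ (∃ φ : L.Formula (Fin (n + 1)), IsPP φ ∧ DefinedBy f φ) ∧ Extendable f

/-- `M` is the pp expansion of `K` induced by the family `f` of extendable pp-definable
implicit operations, with one new symbol of arity `ar i` for each `i`. -/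
def IsPPExpansionVia (K : Set (Alg L)) {ι : Type u} (ar : ι → ℕ)
    (f : ∀ i, PartialFunOn K (ar i)) (M : Set (Alg (L.sum (newLang ar)))) : Prop :=
  (∀ i, 0 < ar i) ∧ (∀ i, InExtPP (f i)) ∧ M = SClosure (expClass K ar f)

/-- Every implicit operation of `K` is interpolated in `M` by a set of terms of the expanded
language. -/
def InterpolatesByTermsInExp (K : Set (Alg L)) {ι : Type u} {ar : ι → ℕ}
    (M : Set (Alg (L.sum (newLang ar)))) : Prop :=
  ∀ n : ℕ, 0 < n → ∀ g : PartialFunOn K n, IsImplicitOp g →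
    ∃ T : Set ((L.sum (newLang ar)).Term (Fin n)),
      ∀ A : Alg (L.sum (newLang ar)), A ∈ M →
        ∀ (hA : algReduct A ∈ K) (x : Fin n → A.carrier) (b : A.carrier),
          b ∈ g (algReduct A) hA x → ∃ t ∈ T, t.realize x = b

/-- `M` is a Beth companion of `K` (via the given expansion datum). -/
def IsBethCompanionVia (K : Set (Alg L)) {ι : Type u} (ar : ι → ℕ)
    (f : ∀ i, PartialFunOn K (ar i)) (M : Set (Alg (L.sum (newLang ar)))) : Prop :=
  IsPPExpansionVia K ar f M ∧ InterpolatesByTermsInExp K M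

/-- A pp expansion is congruence preserving when the `M`-congruences of each member of `M`
coincide with the `K`-congruences of its `L`-reduct. -/
def CongPreserving {N : FirstOrder.Language.{u, u}} (K : Set (Alg L))
    (M : Set (Alg (L.sum N))) : Prop :=
  ∀ A : Alg (L.sum N), A ∈ M → ∀ θ : A.carrier → A.carrier → Prop,
    IsRelCong M A θ ↔ IsRelCong K (algReduct A) θ

/-- Reinterpretation of an `L₁`-algebra as an `L₂`-algebra along a map sending `L₂`-symbols to
`L₁`-terms (both languages are assumed to be purely functional). -/
def reinterpret {L₁ L₂ : FirstOrder.Language.{u, u}} (ρ : ∀ n, L₂.Functions n → L₁.Term (Fin n))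
    (A : Alg L₁) : Alg L₂ where
  carrier := A.carrier
  str :=
    { funMap := fun {k} s x => (ρ k s).realize x
      RelMap := fun {k} _ _ => False }

/-- Two expansions of the same base language `L` are faithfully term equivalent relative to
`L`. -/
def FaithfullyTermEquivRel (L : FirstOrder.Language.{u, u}) {N₁ N₂ : FirstOrder.Language.{u, u}}
    (M₁ : Set (Alg (L.sum N₁))) (M₂ : Set (Alg (L.sum N₂))) : Prop :=
  ∃ (τ : ∀ n, (L.sum N₁).Functions n → (L.sum N₂).Term (Fin n))
    (ρ : ∀ n, (L.sum N₂).Functions n → (L.sum N₁).Term (Fin n)),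
    (∀ (n : ℕ) (s : L.Functions n),
      τ n (Sum.inl s) = Term.func (Sum.inl s : (L.sum N₂).Functions n) Term.var) ∧
    (∀ (n : ℕ) (s : L.Functions n),
      ρ n (Sum.inl s) = Term.func (Sum.inl s : (L.sum N₁).Functions n) Term.var) ∧
    (∀ A : Alg (L.sum N₁), A ∈ M₁ → reinterpret ρ A ∈ M₂) ∧
    (∀ B : Alg (L.sum N₂), B ∈ M₂ → reinterpret τ B ∈ M₁) ∧
    (∀ A : Alg (L.sum N₁), A ∈ M₁ → reinterpret τ (reinterpret ρ A) = A) ∧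
    (∀ B : Alg (L.sum N₂), B ∈ M₂ → reinterpret ρ (reinterpret τ B) = B)

/-- The language of monoids: one binary operation and one constant. -/
def Lmon : FirstOrder.Language.{0, 0} where
  Functions := fun n => match n with
    | 0 => PUnit
    | 2 => PUnit
    | _ => PEmpty
  Relations := fun _ => PEmpty

instance : Lmon.IsAlgebraic := fun _ => inferInstanceAs (IsEmpty PEmpty)

/-- The multiplication symbol. -/
def mulSym : Lmon.Functions 2 := PUnit.unit

/-- The unit symbol. -/
def oneSym : Lmon.Functions 0 := PUnit.unit

/-- The interpretation of the multiplication symbol. -/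
def mmul {M : Type} [Lmon.Structure M] (a b : M) : M :=
  Structure.funMap (L := Lmon) mulSym ![a, b]

/-- The interpretation of the unit symbol. -/
def mone {M : Type} [Lmon.Structure M] : M :=
  Structure.funMap (L := Lmon) oneSym ![]

/-- Powers in an `Lmon`-structure (`mpow a n = aⁿ`, with `mpow a 0 = 1`). -/
def mpow {M : Type} [Lmon.Structure M] (a : M) : ℕ → M
  | 0 => mone
  | k + 1 => mmul (mpow a k) a

/-- The variety of monoids, as a class of `Lmon`-algebras. -/
def MonCl : Set (Alg Lmon) :=
  { A | (∀ a b c : A.carrier, mmul (mmul a b) c = mmul a (mmul b c)) ∧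
        (∀ a : A.carrier, mmul a mone = a) ∧ ∀ a : A.carrier, mmul mone a = a }

/-- The variety of commutative monoids, as a class of `Lmon`-algebras. -/
def CommMonCl : Set (Alg Lmon) :=
  { A | A ∈ MonCl ∧ ∀ a b : A.carrier, mmul a b = mmul b a }

/-! An operation `f` has equal values under homomorphisms that agree on its argument, so `f(a)`
lies in the dominion of `a`. In commutative monoids, identifying `x` and `y` whenever `aⁱ x = aʲ y`
gives a quotient in which `a` becomes trivial; hence so does `f(a)`, that is, `aˡ f(a) = aʳ`. In
monoids, the set `W` of all `q` such that `aˡ q = aʳ` for some `l, r` satisfies `a q ∈ W ↔ q ∈ W`.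
The left multiplication action on `M × ℤ` and its twist by the indicator of `W` are homomorphisms
that agree at `p` exactly when `p q ∈ W ↔ q ∈ W` for all `q`; so they agree at `a`, hence at `f(a)`,
and `q = 1` gives `f(a) ∈ W`.

The exponents can be chosen uniformly because pp formulas are preserved by products: if each pair
`(l, r)` had a counterexample, the product of all of them would be a counterexample to every pair
at once. -/

section PrimitivePositive

/-- The projection of a product of algebras onto a factor. -/
def Alg.piProj {ι : Type u} (A : ι → Alg L) (i : ι) :
    (Alg.pi A).carrier →[L] (A i).carrier where
  toFun x := x i
  map_fun' _ _ := rfl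
  map_rel' _ _ h := h i

theorem IsConjEq.realize_pi {ι : Type u} {A : ι → Alg L} {α : Type v} {k : ℕ}
    {φ : L.BoundedFormula α k} (hφ : IsConjEq φ) {x : α → (Alg.pi A).carrier}
    {y : Fin k → (Alg.pi A).carrier}
    (h : ∀ i, φ.Realize (Alg.piProj A i ∘ x) (Alg.piProj A i ∘ y)) : φ.Realize x y := by
  induction hφ with
  | top => exact BoundedFormula.realize_top.2 trivial
  | equal t₁ t₂ =>
    refine funext fun i => ?_
    have hi : t₁.realize (Sum.elim (Alg.piProj A i ∘ x) (Alg.piProj A i ∘ y)) =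
        t₂.realize (Sum.elim (Alg.piProj A i ∘ x) (Alg.piProj A i ∘ y)) := h i
    rwa [← Sum.comp_elim, HomClass.realize_term, HomClass.realize_term] at hi
  | inf _ _ ih₁ ih₂ =>
    simp only [BoundedFormula.realize_inf] at h ⊢
    exact ⟨ih₁ fun i => (h i).1, ih₂ fun i => (h i).2⟩

theorem IsPP.realize_pi {ι : Type u} {A : ι → Alg L} {α : Type v} {k : ℕ}
    {φ : L.BoundedFormula α k} (hφ : IsPP φ) {x : α → (Alg.pi A).carrier}
    {y : Fin k → (Alg.pi A).carrier}
    (h : ∀ i, φ.Realize (Alg.piProj A i ∘ x) (Alg.piProj A i ∘ y)) : φ.Realize x y := by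
  induction hφ with
  | of_conjEq hφ => exact hφ.realize_pi h
  | ex _ ih =>
    simp only [BoundedFormula.realize_ex] at h ⊢
    choose z hz using h
    refine ⟨z, ih fun i => ?_⟩
    exact (Fin.comp_snoc (Alg.piProj A i) y z).symm ▸ hz i

theorem IsPP.preservedByProdsOn {K : Set (Alg L)} {α : Type v} {φ : L.Formula α} (hφ : IsPP φ) :
    PreservedByProdsOn K φ := by
  intro ι A _ x h
  refine hφ.realize_pi fun i => ?_
  rw [Subsingleton.elim (Alg.piProj A i ∘ default) default]
  exact h i

variable {K : Set (Alg L)} {n : ℕ} {f : PartialFunOn K n}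

theorem DefinedBy.mem_pi {φ : L.Formula (Fin (n + 1))} (hf : DefinedBy f φ) (hφ : IsPP φ)
    {ι : Type u} {A : ι → Alg L} (hA : ∀ i, A i ∈ K) (hpi : Alg.pi A ∈ K)
    {x : Fin n → (Alg.pi A).carrier} {b : (Alg.pi A).carrier}
    (h : ∀ i, b i ∈ f (A i) (hA i) (Alg.piProj A i ∘ x)) : b ∈ f (Alg.pi A) hpi x := by
  refine (hf _ _ _ _).2 (hφ.preservedByProdsOn (K := K) ι A hA _ fun i => ?_)
  have hi := (hf _ _ _ _).1 (h i)
  have hsnoc : Fin.snoc (Alg.piProj A i ∘ x) (b i) = Alg.piProj A i ∘ Fin.snoc x b :=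
    (Fin.comp_snoc (Alg.piProj A i) x b).symm
  rwa [hsnoc] at hi

theorem DefinedBy.exists_forall_of_forall_exists {φ : L.Formula (Fin (n + 1))}
    (hf : DefinedBy f φ) (hφ : IsPP φ) (hK : ClosedUnderProd K) {ι : Type u}
    (R : ι → ∀ A : Alg L, (Fin n → A.carrier) → A.carrier → Prop)
    (hom_R : ∀ i (A B : Alg L) (g : A.carrier →[L] B.carrier) (x : Fin n → A.carrier)
      (b : A.carrier), R i A x b → R i B (g ∘ x) (g b))
    (h : ∀ (A : Alg L) (hA : A ∈ K) (x : Fin n → A.carrier) (b : A.carrier),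
      b ∈ f A hA x → ∃ i, R i A x b) :
    ∃ i, ∀ (A : Alg L) (hA : A ∈ K) (x : Fin n → A.carrier) (b : A.carrier),
      b ∈ f A hA x → R i A x b := by
  by_contra! counterexample
  choose A hA x b hb hR using counterexample
  obtain ⟨i, hi⟩ := h (Alg.pi A) (hK ι A hA) (fun j i => x i j) b (hf.mem_pi hφ hA _ hb)
  exact hR i (hom_R i _ _ (Alg.piProj A i) _ _ hi)

end PrimitivePositive

section Dominion

variable {K : Set (Alg L)}

theorem IsOperationOn.mem_dominion {n : ℕ} {f : PartialFunOn K n} (hf : IsOperationOn f)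
    {A : Alg L} {hA : A ∈ K} {x : Fin n → A.carrier} {b : A.carrier} (hb : b ∈ f A hA x) :
    b ∈ dominion K A.carrier (Set.range x) := by
  intro C hC g h hgh
  have hx : (fun i => g (x i)) = fun i => h (x i) := funext fun i => hgh _ ⟨i, rfl⟩
  exact Part.mem_unique (hf A C hA hC g x b hb) (hx ▸ hf A C hA hC h x b hb)

theorem dominion_mono {M : Type u} [L.Structure M] {s t : Set M} (hst : s ⊆ t) :
    dominion K M s ⊆ dominion K M t :=
  fun _ hb C hC g h hgh => hb C hC g h fun a ha => hgh a (hst ha)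

end Dominion

section LeftQuotient

variable {M : Type*} [Monoid M]

/-- The left quotient `S⁻¹S` of a submonoid by itself. For the powers of `a` it consists of the
solutions `q` of the equations `aˡ q = aʳ`. -/
def leftQuotient (S : Submonoid M) : Set M :=
  {q | ∃ s ∈ S, s * q ∈ S}

theorem one_mem_leftQuotient (S : Submonoid M) : 1 ∈ leftQuotient S :=
  ⟨1, S.one_mem, by simp⟩

theorem mem_leftQuotient_powers {a q : M} :
    q ∈ leftQuotient (Submonoid.powers a) ↔ ∃ l r : ℕ, a ^ l * q = a ^ r := by
  simp [leftQuotient, Submonoid.mem_powers_iff, eq_comm]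

theorem mul_mem_leftQuotient_iff {S : Submonoid M} (hS : ∀ s ∈ S, ∀ t ∈ S, Commute s t)
    {s q : M} (hs : s ∈ S) : s * q ∈ leftQuotient S ↔ q ∈ leftQuotient S := by
  constructor
  · rintro ⟨t, ht, htsq⟩
    exact ⟨t * s, S.mul_mem ht hs, by rwa [mul_assoc]⟩
  · rintro ⟨t, ht, htq⟩
    refine ⟨t, ht, ?_⟩
    rw [← mul_assoc, hS t ht s hs, mul_assoc]
    exact S.mul_mem hs htq

/-- The left multiplication action of `M` on `M × G`, conjugated by the shear
`(q, y) ↦ (q, y + F q)`; the choice `F = 0` gives the untwisted action. -/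
def twistedLeftMul {G : Type*} [AddGroup G] (F : M → G) : M →* Function.End (M × G) where
  toFun p x := (p * x.1, x.2 + (-F x.1 + F (p * x.1)))
  map_one' := funext fun x => by simp [Function.End.one_def]
  map_mul' p p' := funext fun x => Prod.ext (mul_assoc p p' x.1) <| by
    change _ = x.2 + (-F x.1 + F (p' * x.1)) + (-F (p' * x.1) + F (p * (p' * x.1)))
    simp only [mul_assoc, add_assoc, add_neg_cancel_left]

theorem twistedLeftMul_eq_twistedLeftMul_zero_iff {G : Type*} [AddGroup G] {F : M → G} {p : M} :
    twistedLeftMul F p = twistedLeftMul 0 p ↔ ∀ q, F (p * q) = F q := by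
  have apply_eq_iff (x : M × G) :
      twistedLeftMul F p x = twistedLeftMul 0 p x ↔ F (p * x.1) = F x.1 := by
    change (p * x.1, x.2 + (-F x.1 + F (p * x.1))) = (p * x.1, x.2 + (-0 + 0)) ↔ _
    simp [neg_add_eq_zero, eq_comm (a := F x.1)]
  exact funext_iff.trans ⟨fun h q => (apply_eq_iff (q, 0)).1 (h _),
    fun h x => (apply_eq_iff x).2 (h x.1)⟩

/-- The congruence on a commutative monoid that collapses the submonoid `S`. -/
def collapseCon {M : Type*} [CommMonoid M] (S : Submonoid M) : Con M where
  r x y := ∃ s ∈ S, ∃ t ∈ S, s * x = t * y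
  iseqv :=
    { refl := fun _ => ⟨1, S.one_mem, 1, S.one_mem, rfl⟩
      symm := fun ⟨s, hs, t, ht, h⟩ => ⟨t, ht, s, hs, h.symm⟩
      trans := fun ⟨s, hs, t, ht, h⟩ ⟨s', hs', t', ht', h'⟩ =>
        ⟨s' * s, S.mul_mem hs' hs, t * t', S.mul_mem ht ht', by
          rw [mul_assoc, h, mul_left_comm, h', mul_assoc]⟩ }
  mul' := fun ⟨s, hs, t, ht, h⟩ ⟨s', hs', t', ht', h'⟩ =>
    ⟨s * s', S.mul_mem hs hs', t * t', S.mul_mem ht ht', by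
      rw [mul_mul_mul_comm, h, h', mul_mul_mul_comm]⟩

theorem collapseCon_mk'_eq_one_iff {M : Type*} [CommMonoid M] {S : Submonoid M} {q : M} :
    (collapseCon S).mk' q = 1 ↔ q ∈ leftQuotient S := by
  have hmk : (collapseCon S).mk' q = 1 ↔ collapseCon S q 1 := (collapseCon S).eq
  rw [hmk]
  change (∃ s ∈ S, ∃ t ∈ S, s * q = t * 1) ↔ ∃ s ∈ S, s * q ∈ S
  simp

end LeftQuotient

section MonoidStructure

/-- The interpretation of the language of monoids in a monoid. -/
instance monoidStructure (M : Type) [Monoid M] : Lmon.Structure M where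
  funMap {n} f v := match n, f, v with
    | 0, _, _ => 1
    | 2, _, v => v 0 * v 1
    | 1, f, _ => f.elim
    | _ + 3, f, _ => f.elim
  RelMap r _ := r.elim

/-- A monoid as an algebra in the language of monoids. -/
abbrev Alg.ofMonoid (M : Type) [Monoid M] : Alg Lmon where
  carrier := M

/-- A monoid homomorphism as a homomorphism in the language of monoids. -/
def lmonHom {M N : Type} [Monoid M] [Monoid N] (g : M →* N) : M →[Lmon] N where
  toFun := g
  map_fun' {n} f x := match n, f with
    | 0, _ => map_one g
    | 2, _ => map_mul g (x 0) (x 1)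
    | 1, f => f.elim
    | _ + 3, f => f.elim
  map_rel' r _ := r.elim

theorem mpow_eq_pow {M : Type} [Monoid M] (a : M) (k : ℕ) : mpow a k = a ^ k := by
  induction k with
  | zero => exact (pow_zero a).symm
  | succ k ih => rw [pow_succ, ← ih]; rfl

theorem map_mone {A B : Type} [Lmon.Structure A] [Lmon.Structure B] (g : A →[Lmon] B) :
    g mone = mone := by
  have hvec : g ∘ ![] = ![] := Subsingleton.elim _ _
  rw [mone, mone, g.map_fun, hvec]

theorem map_mmul {A B : Type} [Lmon.Structure A] [Lmon.Structure B] (g : A →[Lmon] B) (a b : A) :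
    g (mmul a b) = mmul (g a) (g b) := by
  have hvec : g ∘ ![a, b] = ![g a, g b] := funext (Fin.forall_fin_two.2 ⟨rfl, rfl⟩)
  rw [mmul, mmul, g.map_fun, hvec]

theorem map_mpow {A B : Type} [Lmon.Structure A] [Lmon.Structure B] (g : A →[Lmon] B) (a : A)
    (k : ℕ) : g (mpow a k) = mpow (g a) k := by
  induction k with
  | zero => exact map_mone g
  | succ k ih => rw [mpow, map_mmul, ih, mpow]

theorem ofMonoid_mem_monCl (M : Type) [Monoid M] : Alg.ofMonoid M ∈ MonCl :=
  ⟨mul_assoc (G := M), mul_one (M := M), one_mul (M := M)⟩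

theorem ofMonoid_mem_commMonCl (M : Type) [CommMonoid M] : Alg.ofMonoid M ∈ CommMonCl :=
  ⟨ofMonoid_mem_monCl M, mul_comm (G := M)⟩

/-- The monoid underlying a member of the variety of monoids. -/
abbrev monoidOfMemMonCl {A : Alg Lmon} (hA : A ∈ MonCl) : Monoid A.carrier where
  mul := mmul
  one := mone
  mul_assoc := hA.1
  mul_one := hA.2.1
  one_mul := hA.2.2

theorem eq_ofMonoid {A : Alg Lmon} (hA : A ∈ MonCl) :
    letI := monoidOfMemMonCl hA
    A = Alg.ofMonoid A.carrier := by
  let := monoidOfMemMonCl hA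
  suffices h : A.str = monoidStructure A.carrier from congrArg (Alg.mk A.carrier (str := ·)) h
  ext n f v
  · match n, f with
    | 0, _ => exact congrArg (A.str.funMap oneSym) (Subsingleton.elim v ![])
    | 2, _ => exact congrArg (A.str.funMap mulSym) (funext (Fin.forall_fin_two.2 ⟨rfl, rfl⟩))
    | 1, f => exact f.elim
    | _ + 3, f => exact f.elim
  · exact f.elim

theorem exists_eq_ofMonoid_of_mem_monCl {A : Alg Lmon} (hA : A ∈ MonCl) :
    ∃ (M : Type) (_ : Monoid M), A = Alg.ofMonoid M :=
  ⟨_, _, eq_ofMonoid hA⟩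

theorem exists_eq_ofMonoid_of_mem_commMonCl {A : Alg Lmon} (hA : A ∈ CommMonCl) :
    ∃ (M : Type) (_ : CommMonoid M), A = Alg.ofMonoid M :=
  ⟨_, { monoidOfMemMonCl hA.1 with mul_comm := hA.2 }, eq_ofMonoid hA.1⟩

theorem closedUnderProd_monCl : ClosedUnderProd MonCl := by
  intro ι A hA
  choose M inst hM using fun i => exists_eq_ofMonoid_of_mem_monCl (hA i)
  obtain rfl : A = fun i => Alg.ofMonoid (M i) := funext hM
  exact ofMonoid_mem_monCl (∀ i, M i)

theorem closedUnderProd_commMonCl : ClosedUnderProd CommMonCl := by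
  intro ι A hA
  choose M inst hM using fun i => exists_eq_ofMonoid_of_mem_commMonCl (hA i)
  obtain rfl : A = fun i => Alg.ofMonoid (M i) := funext hM
  exact ofMonoid_mem_commMonCl (∀ i, M i)

end MonoidStructure

section MonoidDominion

theorem monoidHom_eq_of_mem_dominion {K : Set (Alg Lmon)} {M N : Type} [Monoid M] [Monoid N]
    (hN : Alg.ofMonoid N ∈ K) {s : Set M} {b : M} (hb : b ∈ dominion K M s) {g h : M →* N}
    (hgh : Set.EqOn g h s) : g b = h b :=
  hb (Alg.ofMonoid N) hN (lmonHom g) (lmonHom h) hgh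

theorem dominion_monCl_subset_leftQuotient {M : Type} [Monoid M] {S : Submonoid M}
    (hS : ∀ s ∈ S, ∀ t ∈ S, Commute s t) : dominion MonCl M S ⊆ leftQuotient S := by
  intro b hb
  let F : M → ℤ := (leftQuotient S).indicator 1
  have F_mul {s : M} (hs : s ∈ S) (q : M) : F (s * q) = F q := by
    classical simp only [F, Set.indicator_apply, mul_mem_leftQuotient_iff hS hs, Pi.one_apply]
  have agree_at_b : twistedLeftMul F b = twistedLeftMul 0 b :=
    monoidHom_eq_of_mem_dominion (ofMonoid_mem_monCl _) hb fun s hs =>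
      twistedLeftMul_eq_twistedLeftMul_zero_iff.2 (F_mul hs)
  have F_b : F b = 1 :=
    calc F b = F (b * 1) := by rw [mul_one]
      _ = F 1 := twistedLeftMul_eq_twistedLeftMul_zero_iff.1 agree_at_b 1
      _ = 1 := Set.indicator_of_mem (one_mem_leftQuotient S) 1
  exact Set.mem_of_indicator_ne_zero (F_b.trans_ne one_ne_zero)

theorem dominion_commMonCl_subset_leftQuotient {M : Type} [CommMonoid M] (S : Submonoid M) :
    dominion CommMonCl M S ⊆ leftQuotient S := by
  intro b hb
  have collapse_mem : Set.EqOn (collapseCon S).mk' 1 S := fun s hs =>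
    collapseCon_mk'_eq_one_iff.2 ⟨1, S.one_mem, by rwa [one_mul]⟩
  exact collapseCon_mk'_eq_one_iff.1
    (monoidHom_eq_of_mem_dominion (h := 1) (ofMonoid_mem_commMonCl _) hb collapse_mem)

theorem mem_dominion_powers {K : Set (Alg Lmon)} {M : Type} [Monoid M] {a b : M}
    (hb : b ∈ dominion K M {a}) : b ∈ dominion K M (Submonoid.powers a) :=
  dominion_mono (Set.singleton_subset_iff.2 (Submonoid.mem_powers a)) hb

theorem exists_mmul_mpow_eq_mpow_of_mem_leftQuotient {M : Type} [Monoid M] {a b : M}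
    (hb : b ∈ leftQuotient (Submonoid.powers a)) : ∃ l r : ℕ, mmul (mpow a l) b = mpow a r := by
  simp only [mpow_eq_pow]
  exact mem_leftQuotient_powers.1 hb

theorem exists_mmul_mpow_eq_mpow_of_mem_dominion_monCl {A : Alg Lmon} (hA : A ∈ MonCl)
    {a b : A.carrier} (hb : b ∈ dominion MonCl A.carrier {a}) :
    ∃ l r : ℕ, mmul (mpow a l) b = mpow a r := by
  obtain ⟨M, _, rfl⟩ := exists_eq_ofMonoid_of_mem_monCl hA
  have powers_commute : ∀ s ∈ Submonoid.powers a, ∀ t ∈ Submonoid.powers a, Commute s t := by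
    rintro _ ⟨i, rfl⟩ _ ⟨j, rfl⟩
    exact Commute.pow_pow_self a i j
  exact exists_mmul_mpow_eq_mpow_of_mem_leftQuotient
    (dominion_monCl_subset_leftQuotient powers_commute (mem_dominion_powers hb))

theorem exists_mmul_mpow_eq_mpow_of_mem_dominion_commMonCl {A : Alg Lmon} (hA : A ∈ CommMonCl)
    {a b : A.carrier} (hb : b ∈ dominion CommMonCl A.carrier {a}) :
    ∃ l r : ℕ, mmul (mpow a l) b = mpow a r := by
  obtain ⟨M, _, rfl⟩ := exists_eq_ofMonoid_of_mem_commMonCl hA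
  exact exists_mmul_mpow_eq_mpow_of_mem_leftQuotient
    (dominion_commMonCl_subset_leftQuotient _ (mem_dominion_powers hb))

end MonoidDominion

/-- Let `K` be either the variety of monoids or the variety of commutative
monoids. For every unary implicit operation `f` of `K` defined by a primitive positive formula
there exist `l, r ∈ ℕ` such that `aˡ · f(a) = aʳ` for all `A ∈ K` and `a ∈ dom (f^A)`. -/
theorem statement_18 (K : Set (Alg Lmon)) (hK : K = MonCl ∨ K = CommMonCl)
    (f : PartialFunOn K 1) (φ : Lmon.Formula (Fin 2)) (hpp : IsPP φ)
    (hdef : DefinedBy f φ) (hop : IsOperationOn f) :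
    ∃ l r : ℕ, ∀ (A : Alg Lmon) (hA : A ∈ K) (a b : A.carrier),
      b ∈ f A hA ![a] → mmul (mpow a l) b = mpow a r := by
  have hprod : ClosedUnderProd K := by
    rcases hK with rfl | rfl
    exacts [closedUnderProd_monCl, closedUnderProd_commMonCl]
  have pointwise (A : Alg Lmon) (hA : A ∈ K) (x : Fin 1 → A.carrier) (b : A.carrier)
      (hb : b ∈ f A hA x) : ∃ e : ℕ × ℕ, mmul (mpow (x 0) e.1) b = mpow (x 0) e.2 := by
    have hdom : b ∈ dominion K A.carrier {x 0} := Set.range_unique (f := x) ▸ hop.mem_dominion hb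
    refine Prod.exists.2 ?_
    rcases hK with rfl | rfl
    exacts [exists_mmul_mpow_eq_mpow_of_mem_dominion_monCl hA hdom,
      exists_mmul_mpow_eq_mpow_of_mem_dominion_commMonCl hA hdom]
  obtain ⟨⟨l, r⟩, uniform⟩ := hdef.exists_forall_of_forall_exists hpp hprod
    (fun (e : ℕ × ℕ) A x b => mmul (mpow (x 0) e.1) b = mpow (x 0) e.2)
    (fun e A B g x b h => by
      simpa only [map_mmul, map_mpow, Function.comp_apply] using congrArg g h)
    pointwise
  exact ⟨l, r, fun A hA a b hb => uniform A hA ![a] b hb⟩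

end Impl
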